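/- arXiv:0911.3038 — 2 statements merged into one kernel-verified Lean document; each statement's English description precedes it below -/
import Mathlib

section
/- For every base b ≥ 2 and every natural number n > 2·b^b, one has n > P_b(n); in particular no n > 2·b^b is a Munchausen number in base b. -/
/-- Digit power sum: `P b n = Σ cᵢ^cᵢ` over the base-`b` digits of `n`, with `0^0 = 1`. -/
def P (b n : ℕ) : ℕ := ((Nat.digits b n).map (fun c => c ^ c)).sum

/-!
Each of the `L` digits of `n` contributes at most `(b - 1) ^ (b - 1)`. If `L ≤ b`, the digit sum is
at most `b * (b - 1) ^ (b - 1)`. If `L > b`, then `L * (b - 1) ^ (b - 1) < b ^ (L - 1) ≤ n`: for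
`L = b + 1` this comes down to `(b + 1) * (b - 1) < b ^ 2`, and increasing `L` by one at least
doubles the power and at most doubles the product.
-/

theorem digit_power_sum_le_length_mul {b : ℕ} (hb : 1 < b) (n : ℕ) :
    P b n ≤ (Nat.digits b n).length * (b - 1) ^ (b - 1) := by
  have digit_term_le : ∀ x ∈ (Nat.digits b n).map (fun c => c ^ c), x ≤ (b - 1) ^ (b - 1) :=
    List.forall_mem_map.2 fun _ hc =>
      Nat.pow_self_mono (Nat.le_sub_one_of_lt (Nat.digits_lt_base hb hc))
  simpa only [P, List.length_map, smul_eq_mul] using List.sum_le_card_nsmul _ _ digit_term_le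

theorem add_two_mul_pow_self_lt {a : ℕ} (ha : a ≠ 0) : (a + 2) * a ^ a < (a + 1) ^ (a + 1) := by
  obtain ⟨c, rfl⟩ := Nat.exists_eq_succ_of_ne_zero ha
  calc (c + 1 + 2) * (c + 1) ^ (c + 1)
      = ((c + 3) * (c + 1)) * (c + 1) ^ c := by ring
    _ < (c + 2) ^ 2 * (c + 1) ^ c := by gcongr; nlinarith
    _ ≤ (c + 2) ^ 2 * (c + 2) ^ c := by gcongr; omega
    _ = (c + 1 + 1) ^ (c + 1 + 1) := by ring

theorem succ_mul_pow_self_lt_succ_pow {a k : ℕ} (ha : a ≠ 0) (hak : a < k) :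
    (k + 1) * a ^ a < (a + 1) ^ k := by
  induction k, hak using Nat.le_induction with
  | base => exact add_two_mul_pow_self_lt ha
  | succ k _ ih =>
    calc (k + 1 + 1) * a ^ a
        ≤ (k + 1) * 2 * a ^ a := by gcongr; omega
      _ = (k + 1) * a ^ a * 2 := by ring
      _ < (a + 1) ^ k * 2 := by gcongr
      _ ≤ (a + 1) ^ k * (a + 1) := by gcongr; omega
      _ = (a + 1) ^ (k + 1) := (pow_succ ..).symm

theorem length_digits_mul_pow_lt {b n : ℕ} (hb : 1 < b) (hL : b < (Nat.digits b n).length) :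
    (Nat.digits b n).length * (b - 1) ^ (b - 1) < n := by
  obtain ⟨a, rfl⟩ : ∃ a, b = a + 1 := Nat.exists_eq_add_one.2 (by omega)
  obtain ⟨k, hk⟩ : ∃ k, (Nat.digits (a + 1) n).length = k + 1 := Nat.exists_eq_add_one.2 (by omega)
  have pow_le : (a + 1) ^ k ≤ n := (Nat.lt_digits_length_iff hb n).1 (by omega)
  rw [hk, Nat.add_sub_cancel]
  exact (succ_mul_pow_self_lt_succ_pow (by omega) (by omega)).trans_le pow_le

theorem gt_digit_power_sum_general (b n : ℕ) (hb : 2 ≤ b) (hn : n > b * (b - 1) ^ (b - 1)) :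
    n > P b n := by
  refine (digit_power_sum_le_length_mul hb n).trans_lt ?_
  rcases le_or_gt (Nat.digits b n).length b with hL | hL
  · exact (Nat.mul_le_mul_right _ hL).trans_lt hn
  · exact length_digits_mul_pow_lt hb hL

theorem gt_digit_power_sum (b n : ℕ) (hb : 2 ≤ b) (hn : n > 2 * b ^ b) :
    n > P b n := by
  refine gt_digit_power_sum_general b n hb (lt_of_le_of_lt ?_ hn)
  calc b * (b - 1) ^ (b - 1)
      ≤ b * b ^ (b - 1) := by gcongr; omega
    _ = b ^ b := mul_pow_sub_one (by omega) b
    _ ≤ 2 * b ^ b := by omega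
end

section
/- The positive Munchausen numbers in base 4 are exactly 1, 29 and 55; that is, for n ≥ 1, n = P_4(n) if and only if n ∈ {1, 29, 55}. -/
/-!
A `k + 1`-digit number `n` in base `b` satisfies `P b n ≤ (k + 1) * (b - 1) ^ (b - 1)` and
`b ^ k ≤ n`. From `k = b` on, the exponential `b ^ k` exceeds the linear bound; the starting case
`k = b` comes down to `(b + 1) * (b - 1) < b ^ 2`. Hence every Munchausen number in base `b` is
smaller than `b ^ b`, which for `b = 4` leaves the numbers below `256`.
-/

section

variable {b : ℕ}

theorem P_le_length_digits_mul (hb : 1 < b) (n : ℕ) :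
    P b n ≤ (Nat.digits b n).length * (b - 1) ^ (b - 1) := by
  have digit_bound : ∀ x ∈ (Nat.digits b n).map (fun c => c ^ c), x ≤ (b - 1) ^ (b - 1) := by
    simp only [List.forall_mem_map]
    exact fun c hc => Nat.pow_self_mono (Nat.le_sub_one_of_lt (Nat.digits_lt_base hb hc))
  simpa only [P, List.length_map, smul_eq_mul] using List.sum_le_card_nsmul _ _ digit_bound

theorem succ_mul_pred_pow_pred_lt_pow_self (hb : 1 < b) : (b + 1) * (b - 1) ^ (b - 1) < b ^ b := by
  obtain ⟨m, rfl⟩ := Nat.exists_eq_add_of_le' hb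
  calc (m + 2 + 1) * (m + 1) ^ (m + 1)
      = ((m + 3) * (m + 1)) * (m + 1) ^ m := by ring
    _ ≤ ((m + 3) * (m + 1)) * (m + 2) ^ m := by gcongr; omega
    _ < (m + 2) ^ 2 * (m + 2) ^ m := by gcongr; linarith
    _ = (m + 2) ^ (m + 2) := by ring

theorem succ_mul_pred_pow_pred_lt_pow (hb : 1 < b) {k : ℕ} (hk : b ≤ k) :
    (k + 1) * (b - 1) ^ (b - 1) < b ^ k := by
  induction k, hk using Nat.le_induction with
  | base => exact succ_mul_pred_pow_pred_lt_pow_self hb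
  | succ k _ ih =>
    calc (k + 1 + 1) * (b - 1) ^ (b - 1)
        ≤ 2 * ((k + 1) * (b - 1) ^ (b - 1)) := by rw [← mul_assoc]; gcongr; omega
      _ < 2 * b ^ k := by gcongr
      _ ≤ b * b ^ k := by gcongr; exact hb
      _ = b ^ (k + 1) := (pow_succ' b k).symm

theorem P_lt_of_pow_self_le (hb : 1 < b) {n : ℕ} (hn : b ^ b ≤ n) : P b n < n := by
  have n_ne_zero : n ≠ 0 := ((pow_pos (zero_lt_one.trans hb) b).trans_le hn).ne'
  calc P b n
      ≤ (Nat.digits b n).length * (b - 1) ^ (b - 1) := P_le_length_digits_mul hb n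
    _ = (Nat.log b n + 1) * (b - 1) ^ (b - 1) := by rw [Nat.length_digits b n hb n_ne_zero]
    _ < b ^ Nat.log b n := succ_mul_pred_pow_pred_lt_pow hb (Nat.le_log_of_pow_le hb hn)
    _ ≤ n := Nat.pow_log_le_self b n_ne_zero

theorem lt_pow_self_of_eq_P (hb : 1 < b) {n : ℕ} (h : n = P b n) : n < b ^ b :=
  not_le.mp fun hn => (P_lt_of_pow_self_le hb hn).ne' h

end

theorem munchausen_base4 (n : ℕ) (hn : 1 ≤ n) :
    n = P 4 n ↔ n ∈ ({1, 29, 55} : Set ℕ) := by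
  simp only [Set.mem_insert_iff, Set.mem_singleton_iff]
  constructor
  · intro h
    have n_lt : n < 256 := lt_pow_self_of_eq_P (by norm_num) h
    revert h
    interval_cases n <;> norm_num [P]
  · rintro (rfl | rfl | rfl) <;> norm_num [P]
end
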